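/- arXiv:2605.21877 — 2 statements merged into one kernel-verified Lean document; each statement's English description precedes it below -/
import Mathlib

section
/- Let U be a finite-dimensional 𝔽₂-vector space and let 𝒞 be a set of nonzero linear forms on U with dim_{𝔽₂} span(𝒞) ≤ 2. Then there is no homomorphism from F := K4⁻ × F* to the cut template R(U,𝒞). -/
open scoped Classical

/-- A collection of finite edge sets is a 3-graph if every edge has exactly 3 vertices. -/
def IsThreeGraph {α : Type*} (H : Set (Finset α)) : Prop := ∀ e ∈ H, e.card = 3

/-- `φ` is a homomorphism of 3-graphs from `G` to `H`: the image of every edge of `G`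
is a 3-element set that is an edge of `H`. -/
def IsHomOn {α β : Type*} (G : Set (Finset α)) (H : Set (Finset β)) (φ : α → β) : Prop :=
  ∀ e ∈ G, (e.image φ).card = 3 ∧ e.image φ ∈ H

/-- `H` contains a subgraph isomorphic to `G`. -/
def ContainsCopy {α β : Type*} (G : Set (Finset α)) (H : Set (Finset β)) : Prop :=
  ∃ φ : α → β, Function.Injective φ ∧ ∀ e ∈ G, e.image φ ∈ H

/-- `K4⁻`, on vertices `a=0, b=1, c=2, d=3`, with edges `abc, abd, acd`. -/
def K4minus : Set (Finset (Fin 4)) := {{0,1,2}, {0,1,3}, {0,2,3}}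

/-- `F*`, on vertices `1,…,7` (represented by `0,…,6`), with edges `123, 124, 345, 156, 257`. -/
def Fstar : Set (Finset (Fin 7)) := {{0,1,2}, {0,1,3}, {2,3,4}, {0,4,5}, {1,4,6}}

/-- The categorical product of two 3-graphs: a 3-element set of pairs is an edge iff
its set of first coordinates is an edge of `G` and its set of second coordinates is an
edge of `H`. -/
def ProdGraph {α β : Type*} (G : Set (Finset α)) (H : Set (Finset β)) :
    Set (Finset (α × β)) :=
  {e | e.card = 3 ∧ e.image Prod.fst ∈ G ∧ e.image Prod.snd ∈ H}

/-- The 3-graph `F := K4⁻ × F*`. -/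
def F : Set (Finset (Fin 4 × Fin 7)) := ProdGraph K4minus Fstar

/-- The cut template `R(U, 𝒞)`: apex vertices indexed by `𝒞`, bottom vertices `U`, and
edges `{a_c, u, v}` for `c ∈ 𝒞` and distinct `u, v ∈ U` with `c (u + v) = 1`. -/
def CutTemplate (U : Type*) [AddCommGroup U] [Module (ZMod 2) U]
    (C : Set (U →ₗ[ZMod 2] ZMod 2)) : Set (Finset (↥C ⊕ U)) :=
  {e | ∃ (c : ↥C) (u v : U), u ≠ v ∧ (c : U →ₗ[ZMod 2] ZMod 2) (u + v) = 1 ∧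
      e = {Sum.inl c, Sum.inr u, Sum.inr v}}

/-!
The apexes meet each edge of a cut template in exactly one vertex, hence so does their preimage
under a homomorphism from `K4⁻ × F*`. The indicator of that preimage has sum `1` on every edge;
comparing edges that differ by a swap of coordinates shows that it splits as a function on `K4⁻`
plus a function on `F*`, and since `F*` has no vertex set meeting each edge exactly once, the
preimage must be the row of the vertex `0` of `K4⁻`. The other rows then map to `U`, and the row of
`1` carries any two vertices of `F*` lying in a common edge to vectors separated by a form of `𝒞`.
Five vertices of `F*` are pairwise of this kind, while the forms of `𝒞` tell apart at most `2 ^ 2`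
vectors.
-/

open SimpleGraph

section Triples

variable {α β : Type*} [DecidableEq α] [DecidableEq β]

lemma pairwise_ne_of_card_triple_eq_three {a b c : α} (h : ({a, b, c} : Finset α).card = 3) :
    a ≠ b ∧ a ≠ c ∧ b ≠ c := by
  refine ⟨?_, ?_, ?_⟩ <;> rintro rfl <;>
    simp only [Finset.insert_eq_of_mem, Finset.mem_insert, Finset.mem_singleton, true_or, or_true]
      at h <;>
    exact absurd h (Finset.card_le_two.trans_lt (by norm_num)).ne

lemma sum_triple {A : Type*} [AddCommMonoid A] {a b c : α}
    (h : ({a, b, c} : Finset α).card = 3) (w : α → A) :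
    ∑ v ∈ {a, b, c}, w v = w a + w b + w c := by
  obtain ⟨hab, hac, hbc⟩ := pairwise_ne_of_card_triple_eq_three h
  rw [Finset.sum_insert (by simp [hab, hac]), Finset.sum_pair hbc, add_assoc]

lemma IsHomOn.triple_mem {G : Set (Finset α)} {H : Set (Finset β)} {φ : α → β}
    (hφ : IsHomOn G H φ) {a b c : α} (h : {a, b, c} ∈ G) : {φ a, φ b, φ c} ∈ H := by
  convert (hφ _ h).2 using 1
  ext
  simp

lemma triple_mem_prodGraph {G : Set (Finset α)} {H : Set (Finset β)} (hG : IsThreeGraph G)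
    {x y z : α} {i j k : β} (hxyz : {x, y, z} ∈ G) (hijk : {i, j, k} ∈ H) :
    {(x, i), (y, j), (z, k)} ∈ ProdGraph G H := by
  have hfst : ({(x, i), (y, j), (z, k)} : Finset (α × β)).image Prod.fst = {x, y, z} := by
    simp [Finset.image_insert]
  refine ⟨le_antisymm Finset.card_le_three ?_, ?_, ?_⟩
  · rw [← hG _ hxyz, ← hfst]
    exact Finset.card_image_le
  · convert hxyz using 1
    ext
    simp
  · convert hijk using 1
    ext
    simp

end Triples

lemma isThreeGraph_prodGraph {α β : Type*} (G : Set (Finset α)) (H : Set (Finset β)) :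
    IsThreeGraph (ProdGraph G H) := fun _ he ↦ he.1

section Shadow

variable {α : Type*}

/-- The 2-shadow of a hypergraph: the graph joining two distinct vertices when some edge contains
both. -/
def shadow (H : Set (Finset α)) : SimpleGraph α where
  Adj i j := i ≠ j ∧ ∃ e ∈ H, i ∈ e ∧ j ∈ e
  symm := ⟨fun _ _ ⟨hne, e, he, hi, hj⟩ ↦ ⟨hne.symm, e, he, hj, hi⟩⟩
  loopless := ⟨fun _ h ↦ h.1 rfl⟩

lemma IsThreeGraph.exists_triple_mem_of_shadow_adj [DecidableEq α] {H : Set (Finset α)}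
    (hH : IsThreeGraph H) {i j : α} (h : (shadow H).Adj i j) : ∃ k, {i, j, k} ∈ H := by
  obtain ⟨hne, e, he, hi, hj⟩ := h
  have hsub : {i, j} ⊆ e := by simp [Finset.insert_subset_iff, hi, hj]
  have hcard : (e \ {i, j}).card = 1 := by
    rw [Finset.card_sdiff_of_subset hsub, hH e he, Finset.card_pair hne]
  obtain ⟨k, hk⟩ := Finset.card_eq_one.1 hcard
  refine ⟨k, ?_⟩
  convert he using 1
  rw [← Finset.union_sdiff_of_subset hsub, hk, Finset.insert_union, Finset.singleton_union]

lemma eq_of_preconnected {A : Type*} {G : SimpleGraph α} (hG : G.Preconnected) {f : α → A}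
    (hf : ∀ u v, G.Adj u v → f u = f v) (u v : α) : f u = f v := by
  obtain ⟨p⟩ := hG u v
  induction p with
  | nil => rfl
  | cons h _ ih => exact (hf _ _ h).trans ih

end Shadow

section ConstantEdgeSum

variable {α β A : Type*} [AddCommGroup A] {G : Set (Finset α)} {H : Set (Finset β)}
  {w : α × β → A} {s : A}

lemma sum_prodGraph_triple [DecidableEq α] [DecidableEq β] (hG : IsThreeGraph G)
    (hw : ∀ e ∈ ProdGraph G H, ∑ p ∈ e, w p = s) {x y z : α} {i j k : β}
    (hxyz : {x, y, z} ∈ G) (hijk : {i, j, k} ∈ H) : w (x, i) + w (y, j) + w (z, k) = s := by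
  have he := triple_mem_prodGraph hG hxyz hijk
  rw [← sum_triple (isThreeGraph_prodGraph G H _ he) w, hw _ he]

lemma sub_eq_sub_of_shadow_adj (hG : IsThreeGraph G) (hH : IsThreeGraph H)
    (hw : ∀ e ∈ ProdGraph G H, ∑ p ∈ e, w p = s) {x y : α} {i j : β}
    (hxy : (shadow G).Adj x y) (hij : (shadow H).Adj i j) :
    w (x, i) - w (y, i) = w (x, j) - w (y, j) := by
  obtain ⟨z, hz⟩ := hG.exists_triple_mem_of_shadow_adj hxy
  obtain ⟨k, hk⟩ := hH.exists_triple_mem_of_shadow_adj hij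
  have hswap : w (x, i) + w (y, j) = w (y, i) + w (x, j) := by
    apply add_right_cancel (b := w (z, k))
    rw [sum_prodGraph_triple hG hw hz hk,
      sum_prodGraph_triple hG hw (Finset.insert_comm x y {z} ▸ hz) hk]
  rw [sub_eq_sub_iff_add_eq_add, hswap, add_comm]

lemma sub_eq_sub_of_preconnected (hG : IsThreeGraph G) (hH : IsThreeGraph H)
    (hGconn : (shadow G).Preconnected) (hHconn : (shadow H).Preconnected)
    (hw : ∀ e ∈ ProdGraph G H, ∑ p ∈ e, w p = s) (x y : α) (i j : β) :
    w (x, i) - w (y, i) = w (x, j) - w (y, j) := by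
  refine eq_of_preconnected hHconn (f := fun i ↦ w (x, i) - w (y, i)) (fun i j hij ↦ ?_) i j
  rw [sub_eq_sub_iff_sub_eq_sub]
  refine eq_of_preconnected hGconn (f := fun x ↦ w (x, i) - w (x, j)) (fun x y hxy ↦ ?_) x y
  exact sub_eq_sub_iff_sub_eq_sub.1 (sub_eq_sub_of_shadow_adj hG hH hw hxy hij)

end ConstantEdgeSum

section ExactTransversal

variable {α β : Type*}

/-- An exact transversal of a hypergraph is a set of vertices meeting every edge in exactly one
vertex. -/
def IsExactTransversal (H : Set (Finset α)) (S : Set α) : Prop :=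
  ∀ e ∈ H, (↑e ∩ S).ncard = 1

lemma IsExactTransversal.preimage {G : Set (Finset α)} {H : Set (Finset β)} {φ : α → β}
    {S : Set β} (hS : IsExactTransversal H S) (hG : IsThreeGraph G) (hφ : IsHomOn G H φ) :
    IsExactTransversal G (φ ⁻¹' S) := by
  intro e he
  obtain ⟨hcard, hmem⟩ := hφ e he
  have hinj : Set.InjOn φ e := Finset.card_image_iff.1 (hcard.trans (hG e he).symm)
  rw [← (hinj.mono Set.inter_subset_left).ncard_image, Set.image_inter_preimage,
    ← Finset.coe_image, hS _ hmem]

lemma isExactTransversal_iff_sum_indicator {H : Set (Finset α)} {S : Set α} :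
    IsExactTransversal H S ↔ ∀ e ∈ H, ∑ v ∈ e, S.indicator (1 : α → ℤ) v = 1 := by
  refine forall₂_congr fun e _ ↦ ?_
  have hcoe : (↑e ∩ S : Set α) = ↑(e.filter (· ∈ S)) := by
    ext
    simp
  rw [hcoe, Set.ncard_coe_finset, Finset.sum_indicator_eq_sum_filter]
  simp

end ExactTransversal

section K4minus

lemma isThreeGraph_K4minus : IsThreeGraph K4minus := by
  rintro e (rfl | rfl | rfl) <;> rfl

lemma triple_mem_K4minus : ∀ {y z : Fin 4}, y ≠ 0 → z ≠ 0 → y ≠ z → {0, y, z} ∈ K4minus := by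
  simp only [K4minus, Set.mem_insert_iff, Set.mem_singleton_iff]
  decide

lemma preconnected_shadow_K4minus : (shadow K4minus).Preconnected := by
  have htop : shadow K4minus = ⊤ := by
    ext i j
    simp only [shadow, K4minus, Set.mem_insert_iff, Set.mem_singleton_iff, exists_eq_or_imp,
      exists_eq_left, top_adj]
    revert i j
    decide
  exact htop ▸ preconnected_top

variable {β : Type*} {H : Set (Finset β)}

lemma eq_of_ne_zero_of_sum_K4minus_prod [DecidableEq β] {A : Type*} [AddCommGroup A]
    {w : Fin 4 × β → A} {s : A} (hw : ∀ e ∈ ProdGraph K4minus H, ∑ p ∈ e, w p = s)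
    {x y : Fin 4} (hx : x ≠ 0) (hy : y ≠ 0) {i j k : β} (hijk : {i, j, k} ∈ H) :
    w (x, k) = w (y, k) := by
  obtain ⟨z, hz, hzx, hzy⟩ : ∃ z : Fin 4, z ≠ 0 ∧ z ≠ x ∧ z ≠ y := by
    revert x y
    decide
  have hsum {t : Fin 4} (ht : t ≠ 0) (hzt : z ≠ t) : w (0, i) + w (z, j) + w (t, k) = s :=
    sum_prodGraph_triple isThreeGraph_K4minus hw (triple_mem_K4minus hz ht hzt) hijk
  exact add_left_cancel ((hsum hx hzx).trans (hsum hy hzy).symm)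

lemma exists_eq_add_of_sum_K4minus_prod {A : Type*} [AddCommGroup A] (hH : IsThreeGraph H)
    (hconn : (shadow H).Preconnected) (hne : H.Nonempty) {w : Fin 4 × β → A} {s : A}
    (hw : ∀ e ∈ ProdGraph K4minus H, ∑ p ∈ e, w p = s) :
    ∃ (d : A) (b : β → A), (∀ i, w (0, i) = d + b i) ∧ (∀ x ≠ 0, ∀ i, w (x, i) = b i) ∧
      ∀ e ∈ H, d + ∑ i ∈ e, b i = s := by
  have hsub := sub_eq_sub_of_preconnected isThreeGraph_K4minus hH preconnected_shadow_K4minus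
    hconn hw
  obtain ⟨e₀, he₀⟩ := hne
  obtain ⟨i₀, j₀, k₀, -, -, -, rfl⟩ := Finset.card_eq_three.1 (hH e₀ he₀)
  have hapex (i : β) : w (0, i) = w (0, k₀) - w (1, k₀) + w (1, i) := by
    rw [← hsub 0 1 i k₀, sub_add_cancel]
  have hrow (x : Fin 4) (hx : x ≠ 0) (i : β) : w (x, i) = w (1, i) := by
    have hk₀ := eq_of_ne_zero_of_sum_K4minus_prod hw hx one_ne_zero he₀
    rw [← sub_eq_zero, hsub x 1 i k₀, hk₀, sub_self]
  refine ⟨w (0, k₀) - w (1, k₀), fun i ↦ w (1, i), hapex, hrow, fun e he ↦ ?_⟩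
  obtain ⟨i, j, k, -, -, -, rfl⟩ := Finset.card_eq_three.1 (hH e he)
  rw [sum_triple (hH _ he), ← add_assoc, ← add_assoc, ← hapex, ← hrow 2 (by decide) k]
  exact sum_prodGraph_triple isThreeGraph_K4minus hw
    (triple_mem_K4minus one_ne_zero (by decide) (by decide)) he

theorem IsExactTransversal.mem_iff_fst_eq_zero (hH : IsThreeGraph H)
    (hconn : (shadow H).Preconnected) (hno : ∀ T, ¬ IsExactTransversal H T)
    {S : Set (Fin 4 × β)} (hS : IsExactTransversal (ProdGraph K4minus H) S) (p : Fin 4 × β) :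
    p ∈ S ↔ p.1 = 0 := by
  have hne : H.Nonempty := by
    rw [Set.nonempty_iff_ne_empty]
    rintro rfl
    exact hno ∅ fun e he ↦ he.elim
  obtain ⟨d, b, hzero, hrow, hsum⟩ :=
    exists_eq_add_of_sum_K4minus_prod hH hconn hne (isExactTransversal_iff_sum_indicator.1 hS)
  have hmem (q : Fin 4 × β) : q ∈ S ↔ S.indicator (1 : Fin 4 × β → ℤ) q = 1 := by
    by_cases hq : q ∈ S <;> simp [hq]
  have hvalues (q : Fin 4 × β) :
      S.indicator (1 : Fin 4 × β → ℤ) q = 0 ∨ S.indicator (1 : Fin 4 × β → ℤ) q = 1 := by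
    by_cases hq : q ∈ S <;> simp [hq]
  have hd_ne_zero : d ≠ 0 := by
    rintro rfl
    refine hno {i | (1, i) ∈ S} (isExactTransversal_iff_sum_indicator.2 fun e he ↦ ?_)
    rw [← hsum e he, zero_add]
    exact Finset.sum_congr rfl fun i _ ↦ hrow 1 one_ne_zero i
  have hb (i : β) : (b i = 0 ∨ b i = 1) ∧ (d + b i = 0 ∨ d + b i = 1) := by
    rw [← hzero i, ← hrow 1 one_ne_zero i]
    exact ⟨hvalues _, hvalues _⟩
  have hd_ne_neg_one : d ≠ -1 := by
    rintro rfl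
    obtain ⟨e, he⟩ := hne
    have hb_one (i : β) : b i = 1 := by
      have := hb i
      omega
    have hsum_e := hsum e he
    simp [hb_one, hH e he] at hsum_e
  obtain ⟨x, i⟩ := p
  have hb_i := hb i
  rw [hmem]
  rcases eq_or_ne x 0 with rfl | hx
  · simp only [hzero, iff_true]
    omega
  · simp only [hrow x hx, hx, iff_false]
    omega

end K4minus

section SeparationGraph

variable {K U : Type*} [Field K] [AddCommGroup U] [Module K U]

/-- The graph on a vector space joining two vectors when some form of `C` takes different values on
them. -/
def separationGraph (C : Set (Module.Dual K U)) : SimpleGraph U where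
  Adj u v := ∃ c ∈ C, c u ≠ c v
  symm := ⟨fun _ _ ⟨c, hc, hne⟩ ↦ ⟨c, hc, hne.symm⟩⟩
  loopless := ⟨fun _ ⟨_, _, hne⟩ ↦ hne rfl⟩

lemma colorable_separationGraph [Finite K] (C : Set (Module.Dual K U))
    [FiniteDimensional K (Submodule.span K C)] :
    (separationGraph C).Colorable (Nat.card K ^ Module.finrank K (Submodule.span K C)) := by
  have : Fintype K := Fintype.ofFinite K
  have : Module.Free K (Submodule.span K C) := Module.Free.of_divisionRing K (Submodule.span K C)
  let B := Module.finBasis K (Submodule.span K C)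
  let coloring : (separationGraph C).Coloring
      (Fin (Module.finrank K (Submodule.span K C)) → K) := by
    refine Coloring.mk (fun u j ↦ (B j).1 u) fun {u v} ⟨c, hc, hne⟩ heq ↦ hne ?_
    have heval : LinearMap.comp (Module.Dual.eval K U u) (Submodule.span K C).subtype =
        LinearMap.comp (Module.Dual.eval K U v) (Submodule.span K C).subtype :=
      B.ext (congrFun heq)
    exact LinearMap.congr_fun heval ⟨c, Submodule.subset_span hc⟩
  simpa using coloring.colorable

end SeparationGraph

section CutTemplate

variable {U : Type*} [AddCommGroup U] [Module (ZMod 2) U] {C : Set (U →ₗ[ZMod 2] ZMod 2)}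

lemma isExactTransversal_range_inl_cutTemplate :
    IsExactTransversal (CutTemplate U C) (Set.range Sum.inl) := by
  rintro e ⟨c, u, v, -, -, rfl⟩
  have hinter : (↑({Sum.inl c, Sum.inr u, Sum.inr v} : Finset (C ⊕ U)) ∩ Set.range Sum.inl :
      Set (C ⊕ U)) = {Sum.inl c} := by
    ext (a | a) <;> simp
  rw [hinter, Set.ncard_singleton]

lemma apply_add_eq_one_of_mem_cutTemplate {c : C} {u v : U}
    (h : {Sum.inl c, Sum.inr u, Sum.inr v} ∈ CutTemplate U C) : c.1 u + c.1 v = 1 := by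
  obtain ⟨c', u', v', -, hc', he⟩ := h
  have hmem (a : C ⊕ U) : a = Sum.inl c ∨ a = Sum.inr u ∨ a = Sum.inr v ↔
      a = Sum.inl c' ∨ a = Sum.inr u' ∨ a = Sum.inr v' := by
    simpa using Finset.ext_iff.1 he a
  obtain rfl : c = c' := by simpa using hmem (Sum.inl c)
  have hbottom : ({u, v} : Set U) = {u', v'} :=
    Set.ext fun a ↦ by simpa using hmem (Sum.inr a)
  rw [map_add] at hc'
  rcases Set.pair_eq_pair_iff.1 hbottom with ⟨rfl, rfl⟩ | ⟨rfl, rfl⟩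
  · exact hc'
  · rwa [add_comm]

theorem nonempty_hom_shadow_separationGraph {β : Type*} {H : Set (Finset β)}
    (hH : IsThreeGraph H) {φ : Fin 4 × β → C ⊕ U}
    (hφ : IsHomOn (ProdGraph K4minus H) (CutTemplate U C) φ)
    (hapex : ∀ p, φ p ∈ Set.range Sum.inl ↔ p.1 = 0) :
    Nonempty (shadow H →g separationGraph C) := by
  have hbottom (p : Fin 4 × β) : ∃ u, p.1 ≠ 0 → φ p = Sum.inr u := by
    rcases h : φ p with c | u
    · exact ⟨0, fun hp ↦ absurd ((hapex p).1 ⟨c, h.symm⟩) hp⟩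
    · exact ⟨u, fun _ ↦ rfl⟩
  choose b hb using hbottom
  refine ⟨⟨fun i ↦ b (1, i), fun {i j} hij ↦ ?_⟩⟩
  obtain ⟨k, hk⟩ := hH.exists_triple_mem_of_shadow_adj hij
  obtain ⟨c, hc⟩ := (hapex (0, k)).2 rfl
  have hcut {y z : Fin 4} (hy : y ≠ 0) (hz : z ≠ 0) (hyz : y ≠ z) :
      c.1 (b (y, i)) + c.1 (b (z, j)) = 1 := by
    have hkij : {k, i, j} ∈ H := by
      rwa [Finset.insert_comm, Finset.pair_comm k j]
    have he := hφ.triple_mem (triple_mem_prodGraph isThreeGraph_K4minus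
      (triple_mem_K4minus hy hz hyz) hkij)
    rw [← hc, hb _ hy, hb _ hz] at he
    exact apply_add_eq_one_of_mem_cutTemplate (by convert he)
  refine ⟨c, c.2, fun heq ↦ ?_⟩
  have h₁₃ := hcut (y := 1) (z := 3) (by decide) (by decide) (by decide)
  have h₂₃ := hcut (y := 2) (z := 3) (by decide) (by decide) (by decide)
  have h₂₁ := hcut (y := 2) (z := 1) (by decide) (by decide) (by decide)
  have hrows : c.1 (b (1, i)) = c.1 (b (2, i)) := add_right_cancel (h₁₃.trans h₂₃.symm)
  rw [← hrows, ← heq, CharTwo.add_self_eq_zero] at h₂₁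
  exact zero_ne_one h₂₁

theorem colorable_shadow_of_isHomOn [FiniteDimensional (ZMod 2) (Submodule.span (ZMod 2) C)]
    {β : Type*} {H : Set (Finset β)} (hH : IsThreeGraph H) (hconn : (shadow H).Preconnected)
    (hno : ∀ T, ¬ IsExactTransversal H T) {φ : Fin 4 × β → C ⊕ U}
    (hφ : IsHomOn (ProdGraph K4minus H) (CutTemplate U C) φ) :
    (shadow H).Colorable (2 ^ Module.finrank (ZMod 2) (Submodule.span (ZMod 2) C)) := by
  have hS := isExactTransversal_range_inl_cutTemplate.preimage (isThreeGraph_prodGraph _ _) hφ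
  obtain ⟨f⟩ := nonempty_hom_shadow_separationGraph hH hφ (hS.mem_iff_fst_eq_zero hH hconn hno)
  simpa using (colorable_separationGraph C).of_hom f

end CutTemplate

section Fstar

lemma isThreeGraph_Fstar : IsThreeGraph Fstar := by
  rintro e (rfl | rfl | rfl | rfl | rfl) <;> rfl

lemma isClique_shadow_Fstar : (shadow Fstar).IsClique ({0, 1, 2, 3, 4} : Finset (Fin 7)) := by
  intro i hi j hj hij
  rw [Finset.mem_coe] at hi hj
  simp only [shadow, Fstar, Set.mem_insert_iff, Set.mem_singleton_iff, exists_eq_or_imp,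
    exists_eq_left]
  revert i j
  decide

lemma preconnected_shadow_Fstar : (shadow Fstar).Preconnected := by
  have h₀ : ∀ i, (shadow Fstar).Reachable 0 i := by
    intro i
    obtain hi | rfl | rfl : i ∈ ({0, 1, 2, 3, 4} : Finset (Fin 7)) ∨ i = 5 ∨ i = 6 := by
      revert i
      decide
    · rcases eq_or_ne 0 i with rfl | hne
      · rfl
      · exact (isClique_shadow_Fstar (by simp) hi hne).reachable
    · exact Adj.reachable ⟨by decide, {0, 4, 5}, by simp [Fstar]⟩
    · have h₀₁ := isClique_shadow_Fstar (by simp) (by simp) (zero_ne_one (α := Fin 7))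
      have h₁₆ : (shadow Fstar).Adj 1 6 := ⟨by decide, {1, 4, 6}, by simp [Fstar]⟩
      exact h₀₁.reachable.trans h₁₆.reachable
  exact fun i j ↦ (h₀ i).symm.trans (h₀ j)

lemma not_isExactTransversal_Fstar (T : Set (Fin 7)) : ¬ IsExactTransversal Fstar T := by
  intro hT
  rw [isExactTransversal_iff_sum_indicator] at hT
  have hsum {i j k : Fin 7} (he : {i, j, k} ∈ Fstar) :=
    (sum_triple (isThreeGraph_Fstar _ he) _).symm.trans (hT _ he)
  have hnonneg : ∀ i, 0 ≤ T.indicator (1 : Fin 7 → ℤ) i :=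
    Set.indicator_nonneg fun _ _ ↦ zero_le_one
  have h₀₁₂ := hsum (i := 0) (j := 1) (k := 2) (by simp [Fstar])
  have h₀₁₃ := hsum (i := 0) (j := 1) (k := 3) (by simp [Fstar])
  have h₂₃₄ := hsum (i := 2) (j := 3) (k := 4) (by simp [Fstar])
  have h₀₄₅ := hsum (i := 0) (j := 4) (k := 5) (by simp [Fstar])
  have h₁₄₆ := hsum (i := 1) (j := 4) (k := 6) (by simp [Fstar])
  have := hnonneg 0
  have := hnonneg 1
  have := hnonneg 2
  have := hnonneg 4
  have := hnonneg 5
  have := hnonneg 6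
  omega

end Fstar

theorem no_hom_F_to_rank_two_cut_template_general {U : Type*} [AddCommGroup U]
    [Module (ZMod 2) U] (C : Set (U →ₗ[ZMod 2] ZMod 2))
    (hrank : Module.rank (ZMod 2) (Submodule.span (ZMod 2) C) ≤ 2) :
    ¬ ∃ φ : Fin 4 × Fin 7 → C ⊕ U, IsHomOn F (CutTemplate U C) φ := by
  rintro ⟨φ, hφ⟩
  have : FiniteDimensional (ZMod 2) (Submodule.span (ZMod 2) C) :=
    Module.rank_lt_aleph0_iff.1 (hrank.trans_lt Cardinal.natCast_lt_aleph0)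
  have hfinrank : Module.finrank (ZMod 2) (Submodule.span (ZMod 2) C) ≤ 2 :=
    Module.finrank_le_of_rank_le hrank
  have hcolorable : (shadow Fstar).Colorable (2 ^ 2) :=
    (colorable_shadow_of_isHomOn isThreeGraph_Fstar preconnected_shadow_Fstar
      not_isExactTransversal_Fstar hφ).mono (Nat.pow_le_pow_right two_pos hfinrank)
  exact absurd (isClique_shadow_Fstar.card_le_of_colorable hcolorable) (by decide)

/-- If `𝒞` consists of nonzero linear forms and `dim span 𝒞 ≤ 2`, then there is no
homomorphism from `F = K4⁻ × F*` to the cut template `R(U, 𝒞)`. -/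
theorem no_hom_F_to_rank_two_cut_template (U : Type) [AddCommGroup U] [Module (ZMod 2) U]
    [FiniteDimensional (ZMod 2) U] (C : Set (U →ₗ[ZMod 2] ZMod 2))
    (hC : ∀ c ∈ C, c ≠ 0)
    (hrank : Module.finrank (ZMod 2) ↥(Submodule.span (ZMod 2) C) ≤ 2) :
    ¬ ∃ φ : Fin 4 × Fin 7 → ↥C ⊕ U, IsHomOn F (CutTemplate U C) φ :=
  no_hom_F_to_rank_two_cut_template_general C
    (by rw [← Module.finrank_eq_rank]; exact_mod_cast hrank)
end

section
/- Let R_× := R(𝔽₂², {x, y}) be the cut template on U = 𝔽₂² with the two coordinate forms x and y. For every real α ∈ (0, 1/2) and every n, there exists an n-vertex blowup G_α(n) of R_× such that: (i) |G_α(n)| = (1/27)·n³ + o(n³) as n → ∞; and (ii) for every two distinct α, β ∈ (0, 1/2) there exist c > 0 and N such that for all n ≥ N, dist(G_α(n), G_β(n)) ≥ c·n³. -/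
open scoped Classical

/-- The blowup of a 3-graph `T` determined by the part-assignment `g : β → α`
(the part of a vertex `i` of `T` is `g ⁻¹ {i}`): edges are the 3-element subsets of `β`
whose image under `g` is an edge of `T`. -/
def Blowup {α β : Type*} (T : Set (Finset α)) (g : β → α) : Set (Finset β) :=
  {e | e.card = 3 ∧ e.image g ∈ T}

/-- The edit distance between two 3-graphs on the vertex set `Fin n`: the minimum,
over relabellings `ψ`, of the number of edges in the symmetric difference. -/
noncomputable def editDist {n : ℕ} (G H : Set (Finset (Fin n))) : ℕ :=
  sInf {k | ∃ ψ : Equiv.Perm (Fin n), (symmDiff ((fun e => e.image ⇑ψ) '' G) H).ncard = k}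

/-- The two coordinate forms `{x, y}` on `𝔽₂²`. -/
noncomputable def Ccross : Set ((ZMod 2 × ZMod 2) →ₗ[ZMod 2] ZMod 2) :=
  {LinearMap.fst (ZMod 2) (ZMod 2) (ZMod 2), LinearMap.snd (ZMod 2) (ZMod 2) (ZMod 2)}

/-- The cut template `R_× = R(𝔽₂², {x, y})`. -/
noncomputable def Rcross : Set (Finset (↥Ccross ⊕ (ZMod 2 × ZMod 2))) :=
  CutTemplate (ZMod 2 × ZMod 2) Ccross

/-!
The moments of the codegree over ordered pairs of vertices are isomorphism invariants. Each moment
of order `k + 1` changes by at most `6 (k + 1) n ^ k` when one edge is edited, so two families of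
3-graphs whose normalized moments have different limits are at edit distance of order `n ^ 3`. On
blowups of a fixed template the normalized moments converge to the corresponding moments of the
weighted template.

Blow up `R(U, C)` with apex parts of total weight `1/3`, distributed according to `p`, and bottom
parts of total weight `2/3`, all equal. An apex and a bottom vertex then have codegree `1/3`, while
two bottom vertices with difference `d` have codegree one third of the `p`-weight `m(d)` of the
forms that do not vanish at `d`. As a nonzero form takes the value `1` on half of `U`, the average
of `m` over `U`, and with it the edge density, does not depend on `p`, but the average of `m ^ 2`
does: for `R_×` with apex weights `α` and `1 - α` it is `(α ^ 2 + (1 - α) ^ 2 + 1) / 4`, which is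
injective in `α` on `(0, 1/2)`.
-/

section IsThreeGraph

open scoped symmDiff

variable {V W : Type*}

lemma IsThreeGraph.symmDiff {G H : Set (Finset V)} (hG : IsThreeGraph G) (hH : IsThreeGraph H) :
    IsThreeGraph (G ∆ H) :=
  fun e he => he.elim (fun h => hG e h.1) (fun h => hH e h.1)

lemma IsThreeGraph.image_equiv [DecidableEq W] {H : Set (Finset V)} (hH : IsThreeGraph H)
    (ψ : V ≃ W) :
    IsThreeGraph (Finset.image ψ '' H) := by
  rintro _ ⟨e, he, rfl⟩
  rw [Finset.card_image_of_injective e ψ.injective, hH e he]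

end IsThreeGraph

section CodegreeMoment

open scoped symmDiff

variable {V W : Type*} [Fintype V] [DecidableEq V] [Fintype W] [DecidableEq W]

/-- The weighted codegree of the pair `u, v` in `H`: the total `w`-weight of the vertices that
complete `u, v` to an edge. -/
noncomputable def codegree (H : Set (Finset V)) (w : V → ℝ) (u v : V) : ℝ :=
  ∑ z, w z * H.indicator 1 {u, v, z}

/-- The `k`-th weighted moment of the codegrees of `H` over ordered pairs of vertices. With unit
weights the first moment is six times the number of edges. -/
noncomputable def codegreeMoment (k : ℕ) (H : Set (Finset V)) (w : V → ℝ) : ℝ :=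
  ∑ u, ∑ v, w u * w v * codegree H w u v ^ k

lemma codegree_comm (H : Set (Finset V)) (w : V → ℝ) (u v : V) :
    codegree H w u v = codegree H w v u := by
  simp only [codegree, Finset.insert_comm u v]

lemma codegree_one_nonneg (H : Set (Finset V)) (u v : V) : 0 ≤ codegree H 1 u v :=
  Finset.sum_nonneg fun _ _ => mul_nonneg zero_le_one <|
    Set.indicator_nonneg (fun _ _ => zero_le_one) _

lemma codegree_one_le_card (H : Set (Finset V)) (u v : V) :
    codegree H 1 u v ≤ Fintype.card V := by
  calc codegree H 1 u v ≤ ∑ _z : V, (1 : ℝ) := Finset.sum_le_sum fun z _ => by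
        simpa using Set.indicator_le_self' (f := (1 : Finset V → ℝ)) (s := H)
          (fun _ _ => zero_le_one) {u, v, z}
    _ = Fintype.card V := by simp

lemma abs_codegree_one_sub_le (G H : Set (Finset V)) (u v : V) :
    |codegree G 1 u v - codegree H 1 u v| ≤ codegree (G ∆ H) 1 u v := by
  simp only [codegree, Pi.one_apply, one_mul, ← Finset.sum_sub_distrib]
  refine (Finset.abs_sum_le_sum_abs _ _).trans_eq (Finset.sum_congr rfl fun z _ => ?_)
  rw [← Set.apply_indicator_symmDiff abs_neg]
  exact abs_of_nonneg (Set.indicator_nonneg (fun _ _ => zero_le_one) _)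

lemma codegreeMoment_image_equiv (ψ : V ≃ W) (k : ℕ) (H : Set (Finset V)) (w : W → ℝ) :
    codegreeMoment k (Finset.image ψ '' H) w = codegreeMoment k H (w ∘ ψ) := by
  have hind (u v z : V) : (Finset.image ψ '' H).indicator (1 : Finset W → ℝ) {ψ u, ψ v, ψ z} =
      H.indicator 1 {u, v, z} := by
    have himage : ({ψ u, ψ v, ψ z} : Finset W) = Finset.image ψ {u, v, z} := by
      simp only [Finset.image_insert, Finset.image_singleton]
    simp only [Set.indicator, himage, (Finset.image_injective ψ.injective).mem_set_image,
      Pi.one_apply]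
  simp only [codegreeMoment, codegree, ← ψ.sum_comp, hind, Function.comp_apply]

lemma codegreeMoment_smul (k : ℕ) (H : Set (Finset V)) (c : ℝ) (w : V → ℝ) :
    codegreeMoment k H (c • w) = c ^ (k + 2) * codegreeMoment k H w := by
  have hcodegree (u v : V) : codegree H (c • w) u v = c * codegree H w u v := by
    simp only [codegree, Finset.mul_sum, Pi.smul_apply, smul_eq_mul, mul_assoc]
  simp only [codegreeMoment, hcodegree, Finset.mul_sum, Pi.smul_apply, smul_eq_mul]
  exact Finset.sum_congr rfl fun u _ => Finset.sum_congr rfl fun v _ => by ring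

lemma continuous_codegreeMoment (k : ℕ) (H : Set (Finset V)) :
    Continuous (codegreeMoment k H) := by
  unfold codegreeMoment codegree
  fun_prop

lemma card_triples_spanning {e : Finset V} (he : e.card = 3) :
    (Finset.univ.filter fun t : V × V × V => ({t.1, t.2.1, t.2.2} : Finset V) = e).card = 6 := by
  obtain ⟨a, b, c, hab, hac, hbc, rfl⟩ := Finset.card_eq_three.mp he
  have horderings : (Finset.univ.filter fun t : V × V × V =>
      ({t.1, t.2.1, t.2.2} : Finset V) = {a, b, c}) =
      {(a, b, c), (a, c, b), (b, a, c), (b, c, a), (c, a, b), (c, b, a)} := by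
    ext ⟨u, v, z⟩
    simp only [Finset.mem_filter_univ, Finset.ext_iff, Finset.mem_insert, Finset.mem_singleton,
      Prod.mk.injEq]
    refine ⟨fun hspan => ?_, by grind⟩
    have := hspan u; have := hspan v; have := hspan z
    have := hspan a; have := hspan b; have := hspan c
    grind
  rw [horderings]
  grind

lemma IsThreeGraph.codegreeMoment_one_one {H : Set (Finset V)} (hH : IsThreeGraph H) :
    codegreeMoment 1 H 1 = 6 * H.ncard := by
  let span (t : V × V × V) : Finset V := {t.1, t.2.1, t.2.2}
  calc codegreeMoment 1 H 1 = ∑ t : V × V × V, H.indicator 1 (span t) := by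
        simp only [codegreeMoment, codegree, Fintype.sum_prod_type, Pi.one_apply, one_mul,
          pow_one, span]
    _ = ∑ e, ∑ t with span t = e, H.indicator 1 (span t) := (Finset.sum_fiberwise _ _ _).symm
    _ = ∑ e, 6 * H.indicator (1 : Finset V → ℝ) e := Finset.sum_congr rfl fun e _ => by
        by_cases he : e ∈ H
        · rw [Finset.sum_congr rfl fun t ht => by rw [(Finset.mem_filter.mp ht).2],
            Finset.sum_const, card_triples_spanning (hH e he), nsmul_eq_mul, Nat.cast_ofNat]
        · rw [Set.indicator_of_notMem he, mul_zero]
          exact Finset.sum_eq_zero fun t ht => by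
            rw [(Finset.mem_filter.mp ht).2, Set.indicator_of_notMem he]
    _ = 6 * H.ncard := by
        rw [← Finset.mul_sum, Set.ncard_eq_toFinset_card']
        simp [Set.indicator]

lemma IsThreeGraph.abs_codegreeMoment_sub_le {G H : Set (Finset V)} (hG : IsThreeGraph G)
    (hH : IsThreeGraph H) (k : ℕ) :
    |codegreeMoment (k + 1) G 1 - codegreeMoment (k + 1) H 1| ≤
      6 * (k + 1) * (Fintype.card V : ℝ) ^ k * (G ∆ H).ncard := by
  have hpair (u v : V) : |codegree G 1 u v ^ (k + 1) - codegree H 1 u v ^ (k + 1)| ≤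
      codegree (G ∆ H) 1 u v * ((k + 1 : ℕ) * (Fintype.card V : ℝ) ^ k) := by
    have hmax : 0 ≤ max (codegree G 1 u v) (codegree H 1 u v) :=
      le_max_of_le_left (codegree_one_nonneg G u v)
    refine (abs_pow_sub_pow_le _ _ _).trans ?_
    rw [mul_assoc, abs_of_nonneg (codegree_one_nonneg G u v),
      abs_of_nonneg (codegree_one_nonneg H u v), Nat.add_sub_cancel]
    gcongr
    · exact codegree_one_nonneg (G ∆ H) u v
    · exact abs_codegree_one_sub_le G H u v
    · exact max_le (codegree_one_le_card G u v) (codegree_one_le_card H u v)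
  calc |codegreeMoment (k + 1) G 1 - codegreeMoment (k + 1) H 1|
      ≤ ∑ u, ∑ v, |codegree G 1 u v ^ (k + 1) - codegree H 1 u v ^ (k + 1)| := by
        simp only [codegreeMoment, Pi.one_apply, one_mul, ← Finset.sum_sub_distrib]
        exact (Finset.abs_sum_le_sum_abs _ _).trans
          (Finset.sum_le_sum fun u _ => Finset.abs_sum_le_sum_abs _ _)
    _ ≤ ∑ u, ∑ v, codegree (G ∆ H) 1 u v * ((k + 1 : ℕ) * (Fintype.card V : ℝ) ^ k) :=
        Finset.sum_le_sum fun u _ => Finset.sum_le_sum fun v _ => hpair u v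
    _ = codegreeMoment 1 (G ∆ H) 1 * ((k + 1 : ℕ) * (Fintype.card V : ℝ) ^ k) := by
        simp only [codegreeMoment, Finset.sum_mul, Pi.one_apply, one_mul, pow_one]
    _ = 6 * (k + 1) * (Fintype.card V : ℝ) ^ k * (G ∆ H).ncard := by
        rw [(hG.symmDiff hH).codegreeMoment_one_one]
        push_cast
        ring

end CodegreeMoment

section EditDistance

open Filter Topology
open scoped symmDiff

lemma exists_ncard_symmDiff_eq_editDist {n : ℕ} (G H : Set (Finset (Fin n))) :
    ∃ ψ : Equiv.Perm (Fin n), ((Finset.image ψ '' G) ∆ H).ncard = editDist G H :=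
  Nat.sInf_mem (s := {k | ∃ ψ : Equiv.Perm (Fin n),
    ((Finset.image ψ '' G) ∆ H).ncard = k}) ⟨_, 1, rfl⟩

lemma IsThreeGraph.abs_codegreeMoment_sub_le_editDist {n : ℕ} {G H : Set (Finset (Fin n))}
    (hG : IsThreeGraph G) (hH : IsThreeGraph H) (k : ℕ) :
    |codegreeMoment (k + 1) G 1 - codegreeMoment (k + 1) H 1| ≤
      6 * (k + 1) * (n : ℝ) ^ k * editDist G H := by
  obtain ⟨ψ, hψ⟩ := exists_ncard_symmDiff_eq_editDist G H
  simpa only [codegreeMoment_image_equiv, Pi.one_comp, hψ, Fintype.card_fin] using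
    (hG.image_equiv ψ).abs_codegreeMoment_sub_le hH k

lemma exists_forall_mul_cube_le_editDist {G H : (n : ℕ) → Set (Finset (Fin n))}
    (hG : ∀ n, IsThreeGraph (G n)) (hH : ∀ n, IsThreeGraph (H n)) {k : ℕ} {a b : ℝ}
    (ha : Tendsto (fun n : ℕ => codegreeMoment (k + 1) (G n) 1 / (n : ℝ) ^ (k + 3)) atTop (𝓝 a))
    (hb : Tendsto (fun n : ℕ => codegreeMoment (k + 1) (H n) 1 / (n : ℝ) ^ (k + 3)) atTop (𝓝 b))
    (hab : a ≠ b) :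
    ∃ c : ℝ, 0 < c ∧ ∃ N : ℕ, ∀ n : ℕ, N ≤ n → c * (n : ℝ) ^ 3 ≤ editDist (G n) (H n) := by
  have hgap : 0 < |a - b| := abs_pos.mpr (sub_ne_zero.mpr hab)
  obtain ⟨N, hN⟩ := eventually_atTop.mp <|
    ((ha.sub hb).abs.eventually (lt_mem_nhds (half_lt_self hgap))).and (eventually_gt_atTop 0)
  refine ⟨|a - b| / (12 * (k + 1)), by positivity, N, fun n hn => ?_⟩
  obtain ⟨hmoments, hpos⟩ := hN n hn
  have hn : (0 : ℝ) < n := mod_cast hpos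
  rw [← sub_div, abs_div, abs_of_pos (by positivity : (0 : ℝ) < (n : ℝ) ^ (k + 3)),
    lt_div_iff₀ (by positivity)] at hmoments
  refine le_of_mul_le_mul_left ?_ (by positivity : 0 < 6 * (k + 1) * (n : ℝ) ^ k)
  calc 6 * (k + 1) * (n : ℝ) ^ k * (|a - b| / (12 * (k + 1)) * (n : ℝ) ^ 3)
      = |a - b| / 2 * (n : ℝ) ^ (k + 3) := by field_simp; ring
    _ ≤ _ := hmoments.le.trans ((hG n).abs_codegreeMoment_sub_le_editDist (hH n) k)

end EditDistance

section Blowup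

variable {V ι : Type*}

lemma isThreeGraph_blowup (T : Set (Finset ι)) (g : V → ι) : IsThreeGraph (Blowup T g) :=
  fun _ he => he.1

lemma IsThreeGraph.mem_blowup_iff [DecidableEq V] [DecidableEq ι] {T : Set (Finset ι)}
    (hT : IsThreeGraph T)
    (g : V → ι) (u v z : V) : {u, v, z} ∈ Blowup T g ↔ {g u, g v, g z} ∈ T := by
  have himage : Finset.image g {u, v, z} = {g u, g v, g z} := by
    simp only [Finset.image_insert, Finset.image_singleton]
  have hmem : {u, v, z} ∈ Blowup T g ↔
      ({u, v, z} : Finset V).card = 3 ∧ {g u, g v, g z} ∈ T := by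
    rw [← himage]
    unfold Blowup
    rw [Set.mem_ofPred_eq]
    convert Iff.rfl
  refine hmem.trans (and_iff_right_of_imp fun h => le_antisymm Finset.card_le_three ?_)
  rw [← hT _ h, ← himage]
  exact Finset.card_image_le

variable [Fintype V] [Fintype ι] [DecidableEq ι]

/-- The sizes of the parts of the vertex partition `g`, as real weights on the part indices. -/
def partSize (g : V → ι) (i : ι) : ℝ :=
  (Finset.univ.filter fun v => g v = i).card

lemma sum_comp_eq_sum_partSize_mul (g : V → ι) (f : ι → ℝ) :
    ∑ v, f (g v) = ∑ i, partSize g i * f i := by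
  rw [← Finset.sum_fiberwise Finset.univ g]
  refine Finset.sum_congr rfl fun i _ => ?_
  rw [Finset.sum_congr rfl fun v hv => by rw [(Finset.mem_filter.mp hv).2], Finset.sum_const,
    nsmul_eq_mul, partSize]

lemma IsThreeGraph.codegreeMoment_blowup [DecidableEq V] {T : Set (Finset ι)}
    (hT : IsThreeGraph T) (k : ℕ) (g : V → ι) :
    codegreeMoment k (Blowup T g) 1 = codegreeMoment k T (partSize g) := by
  have hcodegree (u v : V) :
      codegree (Blowup T g) 1 u v = codegree T (partSize g) (g u) (g v) := by
    simp only [codegree, Set.indicator, hT.mem_blowup_iff, Pi.one_apply, one_mul]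
    exact sum_comp_eq_sum_partSize_mul g fun i => if {g u, g v, i} ∈ T then 1 else 0
  calc codegreeMoment k (Blowup T g) 1
      = ∑ u, ∑ v, codegree T (partSize g) (g u) (g v) ^ k := by
        simp only [codegreeMoment, hcodegree, Pi.one_apply, one_mul]
    _ = ∑ u, ∑ j, partSize g j * codegree T (partSize g) (g u) j ^ k :=
        Finset.sum_congr rfl fun u _ =>
          sum_comp_eq_sum_partSize_mul g fun j => codegree T (partSize g) (g u) j ^ k
    _ = ∑ i, partSize g i * ∑ j, partSize g j * codegree T (partSize g) i j ^ k :=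
        sum_comp_eq_sum_partSize_mul g fun i =>
          ∑ j, partSize g j * codegree T (partSize g) i j ^ k
    _ = codegreeMoment k T (partSize g) := by
        simp only [codegreeMoment, Finset.mul_sum, mul_assoc]

end Blowup

section Rounding

open Filter Topology

variable {ι : Type*} [Fintype ι]

lemma exists_partSize_eq [DecidableEq ι] {n : ℕ} {N : ι → ℕ} (hN : ∑ i, N i = n) :
    ∃ g : Fin n → ι, partSize g = fun i => (N i : ℝ) := by
  have hcard : Fintype.card (Fin n) = Fintype.card (Σ i, Fin (N i)) := by simp [hN]
  let e := Fintype.equivOfCardEq hcard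
  refine ⟨fun v => (e v).1, funext fun i => congrArg Nat.cast ?_⟩
  calc (Finset.univ.filter fun v => (e v).1 = i).card
      = Fintype.card {v // (e v).1 = i} := (Fintype.card_subtype _).symm
    _ = Fintype.card (Fin (N i)) := Fintype.card_congr <|
        (e.subtypeEquiv fun _ => Iff.rfl).trans (Equiv.sigmaSubtype (β := fun i => Fin (N i)) i)
    _ = N i := Fintype.card_fin _

lemma exists_nat_sizes_tendsto {w : ι → ℝ} (hw : w ∈ stdSimplex ℝ ι) :
    ∃ N : ℕ → ι → ℕ, (∀ n, ∑ i, N n i = n) ∧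
      Tendsto (fun (n : ℕ) i => (N n i : ℝ) / n) atTop (𝓝 w) := by
  obtain ⟨hnonneg, hsum⟩ := hw
  obtain ⟨i₀, -⟩ : ∃ i, w i ≠ 0 := by
    by_contra! hzero
    simp [hzero] at hsum
  have hfloor_sum (n : ℕ) : ∑ i, ⌊w i * n⌋₊ ≤ n := by
    have : ∑ i, (⌊w i * n⌋₊ : ℝ) ≤ n := calc
      _ ≤ ∑ i, w i * n := Finset.sum_le_sum fun i _ =>
        Nat.floor_le (mul_nonneg (hnonneg i) n.cast_nonneg)
      _ = n := by rw [← Finset.sum_mul, hsum, one_mul]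
    exact_mod_cast this
  have hfloor (i : ι) : Tendsto (fun n : ℕ => (⌊w i * n⌋₊ : ℝ) / n) atTop (𝓝 (w i)) :=
    (tendsto_nat_floor_mul_div_atTop (hnonneg i)).comp tendsto_natCast_atTop_atTop
  have hrest : Tendsto (fun n : ℕ => ((n - ∑ j, ⌊w j * n⌋₊ : ℕ) : ℝ) / n) atTop (𝓝 0) := by
    have hlim := (tendsto_finsetSum Finset.univ fun j _ => hfloor j).const_sub 1
    rw [hsum, sub_self] at hlim
    refine hlim.congr' ?_
    filter_upwards [eventually_ne_atTop 0] with n hn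
    rw [Nat.cast_sub (hfloor_sum n), sub_div, div_self (Nat.cast_ne_zero.mpr hn), Nat.cast_sum,
      Finset.sum_div]
  refine ⟨fun n i => ⌊w i * n⌋₊ + if i = i₀ then n - ∑ j, ⌊w j * n⌋₊ else 0, fun n => ?_,
    tendsto_pi_nhds.mpr fun i => ?_⟩
  · rw [Finset.sum_add_distrib, Fintype.sum_ite_eq', Nat.add_sub_cancel' (hfloor_sum n)]
  · rcases eq_or_ne i i₀ with rfl | hi
    · simpa only [if_true, Nat.cast_add, add_div, add_zero] using (hfloor i).add hrest
    · simpa only [if_neg hi, add_zero] using hfloor i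

lemma exists_tendsto_codegreeMoment_blowup [DecidableEq ι] {T : Set (Finset ι)}
    (hT : IsThreeGraph T) {w : ι → ℝ} (hw : w ∈ stdSimplex ℝ ι) :
    ∃ g : (n : ℕ) → Fin n → ι, ∀ k, Tendsto
      (fun n : ℕ => codegreeMoment k (Blowup T (g n)) 1 / (n : ℝ) ^ (k + 2)) atTop
      (𝓝 (codegreeMoment k T w)) := by
  obtain ⟨N, hsum, hN⟩ := exists_nat_sizes_tendsto hw
  choose g hg using fun n => exists_partSize_eq (hsum n)
  refine ⟨g, fun k => (((continuous_codegreeMoment k T).tendsto w).comp hN).congr fun n => ?_⟩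
  have hscale : (fun i => (N n i : ℝ) / n) = (n : ℝ)⁻¹ • partSize (g n) := by
    ext i
    simp only [hg, Pi.smul_apply, smul_eq_mul, div_eq_inv_mul]
  rw [Function.comp_apply, hscale, codegreeMoment_smul, hT.codegreeMoment_blowup, inv_pow,
    div_eq_inv_mul]

end Rounding

section ApexMass

variable {U : Type*} [AddCommGroup U] [Module (ZMod 2) U] {C : Set (U →ₗ[ZMod 2] ZMod 2)}

variable [Fintype U]

lemma sum_ite_eq_one_eq_half_card {c : U →ₗ[ZMod 2] ZMod 2} (hc : c ≠ 0) :
    ∑ d, (if c d = 1 then 1 else 0 : ℝ) = Fintype.card U / 2 := by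
  have hne_one : ∀ a : ZMod 2, ¬ a = 1 ↔ a = 0 := by decide
  obtain ⟨d, hd⟩ : ∃ d, c d = 1 := by
    by_contra hne
    exact hc (LinearMap.ext fun d => (hne_one _).mp (not_exists.mp hne d))
  have hfibers : (Finset.univ.filter fun d => c d = 1).card =
      (Finset.univ.filter fun d => ¬ c d = 1).card := by
    simp only [hne_one]
    exact AddMonoidHom.card_fiber_eq_of_mem_range c ⟨d, hd⟩ ⟨0, map_zero c⟩
  have hcard := Finset.card_filter_add_card_filter_not (s := Finset.univ) fun d => c d = 1
  rw [← hfibers, Finset.card_univ] at hcard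
  rw [Finset.sum_boole, ← hcard, Nat.cast_add]
  ring

variable [Fintype C]

/-- The total `p`-weight of the forms in `C` that do not vanish at `d`. When apexes are weighted
by `p`, it is the codegree of any two bottom vertices whose difference is `d`. -/
noncomputable def apexMass (p : C → ℝ) (d : U) : ℝ :=
  ∑ c, p c * if c.1 d = 1 then 1 else 0

/-- The `k`-th moment of `apexMass p d` for `d` uniform in `U`. -/
noncomputable def apexMassMoment (k : ℕ) (p : C → ℝ) : ℝ :=
  (∑ d : U, apexMass p d ^ k) / Fintype.card U

/-- Weights on the vertices of `R(U, C)`: one third of the mass is spread over the apexes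
according to `p`, two thirds uniformly over `U`. -/
noncomputable def cutWeight (p : C → ℝ) : C ⊕ U → ℝ :=
  Sum.elim (fun c => p c / 3) fun _ => 2 / (3 * Fintype.card U)

lemma cutWeight_mem_stdSimplex {p : C → ℝ} (hp : p ∈ stdSimplex ℝ C) :
    cutWeight p ∈ stdSimplex ℝ (C ⊕ U) := by
  refine ⟨fun i => ?_, ?_⟩
  · rcases i with c | u
    · exact div_nonneg (hp.1 c) zero_le_three
    · simp only [cutWeight, Sum.elim_inr]
      positivity
  · simp only [Fintype.sum_sum_type, cutWeight, Sum.elim_inl, Sum.elim_inr, ← Finset.sum_div,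
      hp.2, Finset.sum_const, Finset.card_univ, nsmul_eq_mul]
    field_simp
    norm_num

lemma apexMassMoment_one (hC : 0 ∉ C) {p : C → ℝ} (hp : ∑ c, p c = 1) :
    apexMassMoment 1 p = 1 / 2 := by
  have hhalf (c : C) : ∑ d, (if c.1 d = 1 then 1 else 0 : ℝ) = Fintype.card U / 2 :=
    sum_ite_eq_one_eq_half_card (ne_of_mem_of_not_mem c.2 hC)
  simp only [apexMassMoment, apexMass, pow_one]
  rw [Finset.sum_comm]
  simp only [← Finset.mul_sum, hhalf, ← Finset.sum_mul, hp, one_mul]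
  field_simp

end ApexMass

section CutTemplate

variable {U : Type*} [AddCommGroup U] [Module (ZMod 2) U] {C : Set (U →ₗ[ZMod 2] ZMod 2)}

lemma isThreeGraph_cutTemplate : IsThreeGraph (CutTemplate U C) := by
  rintro _ ⟨c, u, v, huv, -, rfl⟩
  simp [huv]

variable [DecidableEq (C ⊕ U)]

lemma mem_cutTemplate_iff {e : Finset (C ⊕ U)} : e ∈ CutTemplate U C ↔
    ∃ (c : C) (u v : U), u ≠ v ∧ c.1 (u + v) = 1 ∧ e = {Sum.inl c, Sum.inr u, Sum.inr v} := by
  unfold CutTemplate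
  rw [Set.mem_ofPred_eq]
  convert Iff.rfl

lemma apex_apex_notMem_cutTemplate (c d : C) (i : C ⊕ U) :
    {Sum.inl c, Sum.inl d, i} ∉ CutTemplate U C := by
  rw [mem_cutTemplate_iff]
  rintro ⟨a, u, v, huv, -, hedge⟩
  have hu : Sum.inr u = i := by simpa using Finset.ext_iff.mp hedge (Sum.inr u)
  have hv : Sum.inr v = i := by simpa using Finset.ext_iff.mp hedge (Sum.inr v)
  exact huv (Sum.inr_injective (hu.trans hv.symm))

lemma bottom_bottom_bottom_notMem_cutTemplate (u v z : U) :
    {Sum.inr u, Sum.inr v, Sum.inr z} ∉ CutTemplate U C := by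
  rw [mem_cutTemplate_iff]
  rintro ⟨a, _, _, -, -, hedge⟩
  simpa using Finset.ext_iff.mp hedge (Sum.inl a)

lemma apex_bottom_bottom_mem_cutTemplate_iff (c : C) (u v : U) :
    {Sum.inl c, Sum.inr u, Sum.inr v} ∈ CutTemplate U C ↔ c.1 (u + v) = 1 := by
  rw [mem_cutTemplate_iff]
  constructor
  · rintro ⟨a, x, y, hxy, ha, hedge⟩
    obtain rfl : c = a := by simpa using Finset.ext_iff.mp hedge (Sum.inl c)
    have hx : x = u ∨ x = v := by simpa using Finset.ext_iff.mp hedge (Sum.inr x)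
    have hy : y = u ∨ y = v := by simpa using Finset.ext_iff.mp hedge (Sum.inr y)
    rcases hx with rfl | rfl <;> rcases hy with rfl | rfl
    · exact absurd rfl hxy
    · exact ha
    · rwa [add_comm]
    · exact absurd rfl hxy
  · refine fun h => ⟨c, u, v, ?_, h, rfl⟩
    rintro rfl
    rw [ZModModule.add_self, map_zero] at h
    exact zero_ne_one h

variable [Fintype U] [Fintype C]

lemma codegree_cutTemplate_apex_apex (w : C ⊕ U → ℝ) (c d : C) :
    codegree (CutTemplate U C) w (Sum.inl c) (Sum.inl d) = 0 :=
  Finset.sum_eq_zero fun i _ => by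
    rw [Set.indicator_of_notMem (apex_apex_notMem_cutTemplate c d i), mul_zero]

lemma codegree_cutTemplate_apex_bottom (hC : 0 ∉ C) (p : C → ℝ) (c : C) (u : U) :
    codegree (CutTemplate U C) (cutWeight p) (Sum.inl c) (Sum.inr u) = 1 / 3 := by
  have happex (d : C) : {Sum.inl c, Sum.inr u, Sum.inl d} ∉ CutTemplate U C := by
    rw [Finset.pair_comm (Sum.inr u)]
    exact apex_apex_notMem_cutTemplate c d _
  have hhalf : ∑ v, (if c.1 (u + v) = 1 then 1 else 0 : ℝ) = Fintype.card U / 2 :=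
    (Equiv.sum_comp (Equiv.addLeft u) fun d => if c.1 d = 1 then (1 : ℝ) else 0).trans <|
      sum_ite_eq_one_eq_half_card (ne_of_mem_of_not_mem c.2 hC)
  simp only [codegree, Fintype.sum_sum_type, Set.indicator, happex,
    apex_bottom_bottom_mem_cutTemplate_iff, if_false, mul_zero, Finset.sum_const_zero, zero_add,
    cutWeight, Sum.elim_inr, Pi.one_apply, ← Finset.mul_sum, hhalf]
  field_simp

lemma codegree_cutTemplate_bottom_bottom (p : C → ℝ) (u v : U) :
    codegree (CutTemplate U C) (cutWeight p) (Sum.inr u) (Sum.inr v) =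
      apexMass p (u + v) / 3 := by
  have happex (c : C) : {Sum.inr u, Sum.inr v, Sum.inl c} ∈ CutTemplate U C ↔
      c.1 (u + v) = 1 := by
    rw [Finset.pair_comm (Sum.inr v), Finset.insert_comm (Sum.inr u),
      apex_bottom_bottom_mem_cutTemplate_iff]
  simp only [codegree, Fintype.sum_sum_type, Set.indicator, happex,
    bottom_bottom_bottom_notMem_cutTemplate, if_false, mul_zero, Finset.sum_const_zero, add_zero,
    cutWeight, Sum.elim_inl, Pi.one_apply, apexMass, Finset.sum_div]
  exact Finset.sum_congr rfl fun c _ => by ring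

lemma codegreeMoment_cutTemplate (hC : 0 ∉ C) {p : C → ℝ} (hp : ∑ c, p c = 1) {k : ℕ}
    (hk : k ≠ 0) :
    codegreeMoment k (CutTemplate U C) (cutWeight p) =
      4 / (9 * 3 ^ k) * (1 + apexMassMoment k p) := by
  have hshift (u : U) : ∑ v, apexMass p (u + v) ^ k = ∑ d, apexMass p d ^ k :=
    Equiv.sum_comp (Equiv.addLeft u) fun d => apexMass p d ^ k
  have hcomm (u : U) (c : C) :
      codegree (CutTemplate U C) (cutWeight p) (Sum.inr u) (Sum.inl c) = 1 / 3 := by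
    rw [codegree_comm, codegree_cutTemplate_apex_bottom hC]
  simp only [codegreeMoment, Fintype.sum_sum_type, codegree_cutTemplate_apex_apex, hcomm,
    codegree_cutTemplate_apex_bottom hC, codegree_cutTemplate_bottom_bottom, zero_pow hk]
  simp only [cutWeight, Sum.elim_inl, Sum.elim_inr, mul_zero, Finset.sum_const_zero, zero_add,
    div_pow, one_pow, Finset.sum_add_distrib, ← Finset.mul_sum, ← Finset.sum_mul,
    ← Finset.sum_div, hp, hshift, Finset.sum_const, Finset.card_univ, nsmul_eq_mul,
    apexMassMoment]
  field_simp
  ring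

end CutTemplate

section FarApart

open Asymptotics Filter Topology

lemma isLittleO_sub_cube_of_tendsto {f : ℕ → ℝ} {a : ℝ}
    (hf : Tendsto (fun n : ℕ => f n / (n : ℝ) ^ 3) atTop (𝓝 a)) :
    (fun n : ℕ => f n - a * (n : ℝ) ^ 3) =o[atTop] fun n : ℕ => (n : ℝ) ^ 3 := by
  have hpos : ∀ᶠ n : ℕ in atTop, (n : ℝ) ^ 3 ≠ 0 := by
    filter_upwards [eventually_ne_atTop 0] with n hn
    positivity
  rw [isLittleO_iff_tendsto' (hpos.mono fun n hn h => absurd h hn), ← sub_self a]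
  refine (hf.sub_const a).congr' (hpos.mono fun n hn => ?_)
  exact ((sub_div _ _ _).trans (congrArg _ (mul_div_cancel_right₀ a hn))).symm

theorem crossed_blowups_far_apart_general {U : Type*} [AddCommGroup U] [Module (ZMod 2) U]
    [Fintype U] {C : Set (U →ₗ[ZMod 2] ZMod 2)} [Fintype C] (hC : 0 ∉ C) :
    ∃ G : (C → ℝ) → (n : ℕ) → Set (Finset (Fin n)),
      (∀ p ∈ stdSimplex ℝ C, ∀ n : ℕ,
        ∃ g : Fin n → C ⊕ U, G p n = Blowup (CutTemplate U C) g) ∧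
      (∀ p ∈ stdSimplex ℝ C,
        (fun n : ℕ => ((G p n).ncard : ℝ) - (n : ℝ) ^ 3 / 27)
          =o[atTop] fun n : ℕ => (n : ℝ) ^ 3) ∧
      (∀ p ∈ stdSimplex ℝ C, ∀ q ∈ stdSimplex ℝ C, ∀ k : ℕ,
        apexMassMoment k p ≠ apexMassMoment k q →
        ∃ c : ℝ, 0 < c ∧ ∃ N : ℕ, ∀ n : ℕ, N ≤ n →
          c * (n : ℝ) ^ 3 ≤ (editDist (G p n) (G q n) : ℝ)) := by
  choose! g hg using fun (p : C → ℝ) (hp : p ∈ stdSimplex ℝ C) =>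
    exists_tendsto_codegreeMoment_blowup isThreeGraph_cutTemplate
      (cutWeight_mem_stdSimplex (U := U) hp)
  refine ⟨fun p n => Blowup (CutTemplate U C) (g p n), fun p _ n => ⟨g p n, rfl⟩,
    fun p hp => ?_, fun p hp q hq k hpq => ?_⟩
  · have hedges := (hg p hp 1).div_const 6
    rw [codegreeMoment_cutTemplate hC hp.2 one_ne_zero, apexMassMoment_one hC hp.2] at hedges
    simp only [(isThreeGraph_blowup _ _).codegreeMoment_one_one] at hedges
    convert isLittleO_sub_cube_of_tendsto (hedges.congr fun n => ?_) using 3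
    · norm_num
      ring
    · ring
  · obtain _ | k := k
    · simp [apexMassMoment] at hpq
    refine exists_forall_mul_cube_le_editDist (fun _ => isThreeGraph_blowup _ _)
      (fun _ => isThreeGraph_blowup _ _) (hg p hp (k + 1)) (hg q hq (k + 1)) ?_
    rw [codegreeMoment_cutTemplate hC hp.2 k.succ_ne_zero,
      codegreeMoment_cutTemplate hC hq.2 k.succ_ne_zero]
    simpa using hpq

end FarApart

section CrossTemplate

lemma zero_notMem_Ccross : 0 ∉ Ccross := by
  rintro (h | h)
  · simpa using LinearMap.congr_fun h (1, 0)
  · simpa using LinearMap.congr_fun h (0, 1)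

noncomputable instance fintypeCcross : Fintype Ccross :=
  (Set.toFinite {LinearMap.fst _ _ _, LinearMap.snd _ _ _}).fintype

lemma fst_ne_snd :
    LinearMap.fst (ZMod 2) (ZMod 2) (ZMod 2) ≠ LinearMap.snd (ZMod 2) (ZMod 2) (ZMod 2) :=
  fun h => by simpa using LinearMap.congr_fun h (1, 0)

lemma sum_Ccross (f : (ZMod 2 × ZMod 2 →ₗ[ZMod 2] ZMod 2) → ℝ) :
    ∑ c : Ccross, f c = f (LinearMap.fst _ _ _) + f (LinearMap.snd _ _ _) := by
  rw [← Finset.sum_pair fst_ne_snd]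
  exact (Finset.sum_subtype _ (fun c => by simp [Ccross]) f).symm

/-- The apex weights `α` for the form `x` and `1 - α` for the form `y` of `R_×`. -/
noncomputable def crossWeight (α : ℝ) (c : Ccross) : ℝ :=
  if c.1 = LinearMap.fst (ZMod 2) (ZMod 2) (ZMod 2) then α else 1 - α

lemma sum_crossWeight_mul (α : ℝ) (f : (ZMod 2 × ZMod 2 →ₗ[ZMod 2] ZMod 2) → ℝ) :
    ∑ c, crossWeight α c * f c =
      α * f (LinearMap.fst _ _ _) + (1 - α) * f (LinearMap.snd _ _ _) := by
  have hsum := sum_Ccross fun c => (if c = LinearMap.fst _ _ _ then α else 1 - α) * f c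
  rwa [if_pos rfl, if_neg fst_ne_snd.symm] at hsum

lemma crossWeight_mem_stdSimplex {α : ℝ} (hα : α ∈ Set.Icc (0 : ℝ) 1) :
    crossWeight α ∈ stdSimplex ℝ Ccross := by
  refine ⟨fun c => ?_, ?_⟩
  · unfold crossWeight
    split_ifs
    exacts [hα.1, sub_nonneg.mpr hα.2]
  · simpa using sum_crossWeight_mul α fun _ => 1

lemma apexMassMoment_two_crossWeight (α : ℝ) :
    apexMassMoment 2 (crossWeight α) = (α ^ 2 + (1 - α) ^ 2 + 1) / 4 := by
  have hmass (d : ZMod 2 × ZMod 2) : apexMass (crossWeight α) d =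
      α * (if d.1 = 1 then 1 else 0) + (1 - α) * (if d.2 = 1 then 1 else 0) :=
    sum_crossWeight_mul α fun c => if c d = 1 then 1 else 0
  have hcard : Fintype.card (ZMod 2 × ZMod 2) = 4 := rfl
  have hsum (f : ZMod 2 → ℝ) : ∑ a, f a = f 0 + f 1 := Fin.sum_univ_two f
  simp only [apexMassMoment, hmass, Fintype.sum_prod_type, hsum, hcard, zero_ne_one, if_true,
    if_false]
  push_cast
  ring

lemma injOn_apexMassMoment_two_crossWeight :
    Set.InjOn (fun α => apexMassMoment 2 (crossWeight α)) (Set.Iic (1 / 2)) := by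
  intro α hα β hβ h
  simp only [apexMassMoment_two_crossWeight, Set.mem_Iic] at h hα hβ
  rcases mul_eq_zero.mp (by linarith : (α - β) * (1 - α - β) = 0) with h | h
  · exact sub_eq_zero.mp h
  · linarith

end CrossTemplate

open Asymptotics Filter in
/-- For every `α ∈ (0, 1/2)` and every `n` there is an `n`-vertex blowup `G α n` of
`R_×` with `|G α n| = n³/27 + o(n³)`, such that for distinct `α, β ∈ (0, 1/2)` the
graphs `G α n` and `G β n` are at edit distance at least `c n³` eventually. -/
theorem crossed_blowups_far_apart :
    ∃ G : ℝ → (n : ℕ) → Set (Finset (Fin n)),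
      (∀ α, α ∈ Set.Ioo (0 : ℝ) (1 / 2) → ∀ n : ℕ,
        ∃ g : Fin n → ↥Ccross ⊕ (ZMod 2 × ZMod 2), G α n = Blowup Rcross g) ∧
      (∀ α, α ∈ Set.Ioo (0 : ℝ) (1 / 2) →
        (fun n : ℕ => ((G α n).ncard : ℝ) - (n : ℝ) ^ 3 / 27)
          =o[atTop] fun n : ℕ => (n : ℝ) ^ 3) ∧
      (∀ α, α ∈ Set.Ioo (0 : ℝ) (1 / 2) → ∀ β, β ∈ Set.Ioo (0 : ℝ) (1 / 2) → α ≠ β →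
        ∃ c : ℝ, 0 < c ∧ ∃ N : ℕ, ∀ n : ℕ, N ≤ n →
          c * (n : ℝ) ^ 3 ≤ (editDist (G α n) (G β n) : ℝ)) := by
  have hmem {α : ℝ} (hα : α ∈ Set.Ioo (0 : ℝ) (1 / 2)) : crossWeight α ∈ stdSimplex ℝ Ccross :=
    crossWeight_mem_stdSimplex ⟨hα.1.le, by linarith [hα.2]⟩
  obtain ⟨G, hblowup, hcard, hfar⟩ := crossed_blowups_far_apart_general zero_notMem_Ccross
  exact ⟨fun α => G (crossWeight α), fun α hα => hblowup _ (hmem hα), fun α hα => hcard _ (hmem hα),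
    fun α hα β hβ hαβ => hfar _ (hmem hα) _ (hmem hβ) 2 fun h =>
      hαβ (injOn_apexMassMoment_two_crossWeight hα.2.le hβ.2.le h)⟩
end
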